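/- Let Λ ≥ 0, R > 0, p₀ ∈ ℝ³, and let d : B_R(p₀) → ℝ³ be a smooth map with ‖d(x)‖ = 1 for all x in the closed ball B_R(p₀). Set τ = Δd + |∇d|² d (componentwise Laplacian, |∇d|² = Σ_{i,j} (∂_i d_j)²) and assume ∫_{B_R(p₀)} ‖τ‖² dx ≤ Λ. Then for every 0 < r ≤ R: (1/r) ∫_{B_r(p₀)} |∇d|² dx ≤ (2/R) ∫_{B_R(p₀)} |∇d|² dx + 4ΛR. -/

import Mathlib

open MeasureTheory

noncomputable section

/-- Standard basis vectors of `ℝ³`. -/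
def E3 (i : Fin 3) : EuclideanSpace ℝ (Fin 3) := EuclideanSpace.single i 1

/-- Componentwise Laplacian of a map `ℝ³ → ℝ³`. -/
def lap3 (d : EuclideanSpace ℝ (Fin 3) → EuclideanSpace ℝ (Fin 3))
    (x : EuclideanSpace ℝ (Fin 3)) : EuclideanSpace ℝ (Fin 3) :=
  ∑ i : Fin 3, fderiv ℝ (fun y => fderiv ℝ d y (E3 i)) x (E3 i)

/-- `|∇d|² = Σ_{i,j} (∂_i d_j)²` for a map `ℝ³ → ℝ³`. -/
def gradSq3 (d : EuclideanSpace ℝ (Fin 3) → EuclideanSpace ℝ (Fin 3))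
    (x : EuclideanSpace ℝ (Fin 3)) : ℝ :=
  ∑ i : Fin 3, ∑ j : Fin 3, (fderiv ℝ d x (E3 i) j) ^ 2

/-!
Since `‖d‖ = 1`, the tension field `τ` and `Δ d` have the same inner product with every derivative
of `d`, so the first variation of the Dirichlet energy along `φ • (x - p)` involves `d` only through
`∇d` and `τ`. In dimension `m + 2` take `φ = s⁻ᵐ - R⁻ᵐ` with `ρ = ‖x - p‖` and `s = max ρ r`. For
`r < ρ < R` the trace of the stress-energy tensor and the derivative of `φ` cancel up to
`(m / 2) R⁻ᵐ |∇d|²` and a term `-m ρ⁻ᵐ⁻² |∇d (x - p)|²` of good sign, which absorbs the tension term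
by AM-GM; for `ρ < r` half of `(m / 2) r⁻ᵐ |∇d|²` absorbs it and the other half is what the
estimate keeps.
-/

open Filter Topology Metric
open scoped NNReal RealInnerProductSpace InnerProductSpace Laplacian

section IntegrationByParts

variable {E : Type*} [NormedAddCommGroup E] [NormedSpace ℝ E] {C D : ℝ≥0} {g φ : E → ℝ}

theorem lineDeriv_eq_zero_of_nonneg (hφ : 0 ≤ φ) {x : E} (hx : φ x = 0) (v : E) :
    lineDeriv ℝ φ x v = 0 :=
  congrFun (IsLocalMin.lineDeriv_eq_zero (.of_forall fun y => hx.trans_le (hφ y))) v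

theorem support_lineDeriv_subset_tsupport (φ : E → ℝ) (v : E) :
    (Function.support fun x => lineDeriv ℝ φ x v) ⊆ tsupport φ := by
  refine Function.support_subset_iff'.2 fun x hx => ?_
  rw [(notMem_tsupport_iff_eventuallyEq.1 hx).lineDeriv_eq]
  simp [lineDeriv]

variable [MeasurableSpace E] [BorelSpace E] {μ : Measure E}

theorem integrable_lineDeriv_mul_of_hasCompactSupport_right [IsFiniteMeasureOnCompacts μ]
    (hg : LipschitzWith C g) (hφ : Continuous φ) (hφc : HasCompactSupport φ) (v : E) :
    Integrable (fun x => lineDeriv ℝ g x v * φ x) μ :=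
  (hφ.integrable_of_hasCompactSupport hφc).bdd_mul
    (aestronglyMeasurable_lineDeriv hg.continuous μ)
    (.of_forall fun _ => norm_lineDeriv_le_of_lipschitz ℝ hg)

theorem integrable_lineDeriv_mul_of_hasCompactSupport_left [IsFiniteMeasureOnCompacts μ]
    (hφ : LipschitzWith D φ) (hφc : HasCompactSupport φ) (hg : Continuous g) (v : E) :
    Integrable (fun x => lineDeriv ℝ φ x v * g x) μ := by
  have hsupp : Function.support (fun x => lineDeriv ℝ φ x v * g x) ⊆ tsupport φ :=
    (Function.support_mul_subset_left _ _).trans (support_lineDeriv_subset_tsupport φ v)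
  refine (integrableOn_iff_integrable_of_support_subset hsupp).1 ?_
  exact (hg.continuousOn.integrableOn_compact hφc).bdd_mul
    (aestronglyMeasurable_lineDeriv hφ.continuous _)
    (.of_forall fun _ => norm_lineDeriv_le_of_lipschitz ℝ hφ)

variable [FiniteDimensional ℝ E]

theorem integral_lineDeriv_mul_add_lineDeriv_mul [μ.IsAddHaarMeasure] (hg : LipschitzWith C g)
    (hφ : LipschitzWith D φ) (hφc : HasCompactSupport φ) (v : E) :
    ∫ x, (lineDeriv ℝ g x v * φ x + lineDeriv ℝ φ x v * g x) ∂μ = 0 := by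
  rw [integral_add (integrable_lineDeriv_mul_of_hasCompactSupport_right hg hφ.continuous hφc v)
    (integrable_lineDeriv_mul_of_hasCompactSupport_left hφ hφc hg.continuous v),
    hg.integral_lineDeriv_mul_eq hφ hφc]
  simp only [lineDeriv_neg, neg_mul, integral_neg, neg_add_cancel]

/- Nonnegativity of `φ` makes each of its zeros a minimum, so that the line derivatives of `φ`
vanish at every point outside `U`, whatever the boundary of `U` looks like. -/
theorem integrableOn_and_setIntegral_lineDeriv_mul_add [μ.IsAddHaarMeasure] {U : Set E}
    (hU : IsOpen U) (hg : LipschitzOnWith C g U) (hφ : LipschitzWith D φ)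
    (hφc : HasCompactSupport φ) (hφ_nonneg : 0 ≤ φ) (hφU : ∀ x ∉ U, φ x = 0) (v : E) :
    IntegrableOn (fun x => lineDeriv ℝ g x v * φ x + lineDeriv ℝ φ x v * g x) U μ ∧
      ∫ x in U, (lineDeriv ℝ g x v * φ x + lineDeriv ℝ φ x v * g x) ∂μ = 0 := by
  obtain ⟨G, hG, hgG⟩ := hg.extend_real
  have hEq : U.EqOn (fun x => lineDeriv ℝ G x v * φ x + lineDeriv ℝ φ x v * G x)
      (fun x => lineDeriv ℝ g x v * φ x + lineDeriv ℝ φ x v * g x) := by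
    intro x hx
    have hGg : G =ᶠ[𝓝 x] g := eventually_of_mem (hU.mem_nhds hx) fun y hy => (hgG hy).symm
    simp only [hGg.lineDeriv_eq, hGg.eq_of_nhds]
  have hzero : ∀ x ∉ U, lineDeriv ℝ G x v * φ x + lineDeriv ℝ φ x v * G x = 0 := fun x hx => by
    simp [hφU x hx, lineDeriv_eq_zero_of_nonneg hφ_nonneg (hφU x hx)]
  have hint : Integrable (fun x => lineDeriv ℝ G x v * φ x + lineDeriv ℝ φ x v * G x) μ :=
    (integrable_lineDeriv_mul_of_hasCompactSupport_right hG hφ.continuous hφc v).add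
      (integrable_lineDeriv_mul_of_hasCompactSupport_left hφ hφc hG.continuous v)
  refine ⟨hint.integrableOn.congr_fun hEq hU.measurableSet, ?_⟩
  rw [← setIntegral_congr_fun hU.measurableSet hEq,
    setIntegral_eq_integral_of_forall_compl_eq_zero hzero,
    integral_lineDeriv_mul_add_lineDeriv_mul hG hφ hφc v]

end IntegrationByParts

section StressEnergy

variable {ι E F : Type*} [Fintype ι] [NormedAddCommGroup E] [InnerProductSpace ℝ E]
  [NormedAddCommGroup F] [InnerProductSpace ℝ F]

/-- The squared Hilbert–Schmidt norm of `L`, computed in the orthonormal basis `b`. For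
`L = fderiv ℝ d x` it is the Dirichlet energy density `|∇d|²` at `x`. -/
def hilbertSchmidtSq (b : OrthonormalBasis ι ℝ E) (L : E →L[ℝ] F) : ℝ :=
  ∑ i, ‖L (b i)‖ ^ 2

/-- The stress-energy tensor `⟪L v, L w⟫ - ½ |L|² ⟪v, w⟫` of the Dirichlet energy, for a map whose
derivative at the point considered is `L`. -/
def stressEnergy (b : OrthonormalBasis ι ℝ E) (L : E →L[ℝ] F) (v w : E) : ℝ :=
  ⟪L v, L w⟫ - hilbertSchmidtSq b L / 2 * ⟪v, w⟫

variable (b : OrthonormalBasis ι ℝ E)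

theorem hilbertSchmidtSq_nonneg (L : E →L[ℝ] F) : 0 ≤ hilbertSchmidtSq b L :=
  Finset.sum_nonneg fun _ _ => sq_nonneg _

theorem norm_apply_sq_le_mul_hilbertSchmidtSq (L : E →L[ℝ] F) (v : E) :
    ‖L v‖ ^ 2 ≤ ‖v‖ ^ 2 * hilbertSchmidtSq b L := by
  have hv : ‖L v‖ ≤ ∑ i, ‖⟪b i, v⟫‖ * ‖L (b i)‖ := by
    conv_lhs => rw [← b.sum_repr' v, map_sum]
    simpa only [map_smul, norm_smul] using norm_sum_le Finset.univ fun i => L (⟪b i, v⟫ • b i)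
  calc ‖L v‖ ^ 2 ≤ (∑ i, ‖⟪b i, v⟫‖ * ‖L (b i)‖) ^ 2 := by gcongr
    _ ≤ (∑ i, ‖⟪b i, v⟫‖ ^ 2) * ∑ i, ‖L (b i)‖ ^ 2 := Finset.sum_mul_sq_le_sq_mul_sq ..
    _ = ‖v‖ ^ 2 * hilbertSchmidtSq b L := by rw [b.sum_sq_norm_inner_right, hilbertSchmidtSq]

theorem stressEnergy_self (L : E →L[ℝ] F) (v : E) :
    stressEnergy b L v v = ‖L v‖ ^ 2 - hilbertSchmidtSq b L / 2 * ‖v‖ ^ 2 := by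
  simp only [stressEnergy, real_inner_self_eq_norm_sq]

theorem sum_inner_mul_stressEnergy (L : E →L[ℝ] F) (v w : E) :
    ∑ i, ⟪v, b i⟫ * stressEnergy b L (b i) w = stressEnergy b L v w := by
  have hL : ∑ i, ⟪v, b i⟫ * ⟪L (b i), L w⟫ = ⟪L v, L w⟫ := by
    conv_rhs => rw [← b.sum_repr' v, map_sum, sum_inner]
    simp only [map_smul, real_inner_smul_left, real_inner_comm v]
  simp only [stressEnergy, mul_sub, Finset.sum_sub_distrib, hL,
    mul_left_comm _ (hilbertSchmidtSq b L / 2), ← Finset.mul_sum, b.sum_inner_mul_inner]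

theorem hasDerivAt_hilbertSchmidtSq {L : ℝ → E →L[ℝ] F} {L' : E →L[ℝ] F} {t : ℝ}
    (hL : HasDerivAt L L' t) :
    HasDerivAt (fun s => hilbertSchmidtSq b (L s)) (2 * ∑ i, ⟪L t (b i), L' (b i)⟫) t := by
  rw [Finset.mul_sum]
  exact HasDerivAt.fun_sum fun i _ => by
    simpa using (hL.clm_apply (hasDerivAt_const t (b i))).norm_sq

theorem hasDerivAt_stressEnergy {L : ℝ → E →L[ℝ] F} {L' : E →L[ℝ] F} {w : ℝ → E} {w' : E} {t : ℝ}
    (hL : HasDerivAt L L' t) (hw : HasDerivAt w w' t) (v : E) :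
    HasDerivAt (fun s => stressEnergy b (L s) v (w s))
      (stressEnergy b (L t) v w' + (⟪L' v, L t (w t)⟫ + ⟪L t v, L' (w t)⟫
        - (∑ i, ⟪L t (b i), L' (b i)⟫) * ⟪v, w t⟫)) t := by
  have hLv : HasDerivAt (fun s => L s v) (L' v) t := by
    simpa using hL.clm_apply (hasDerivAt_const t v)
  have hinner := (hLv.inner ℝ (hL.clm_apply hw)).sub
    (((hasDerivAt_hilbertSchmidtSq b hL).div_const 2).mul ((hasDerivAt_const t v).inner ℝ hw))
  refine hinner.congr_deriv ?_
  simp only [stressEnergy, inner_add_right, inner_zero_left]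
  ring

variable [FiniteDimensional ℝ E] {d : E → F} {x : E}

theorem laplacian_eq_sum_fderiv_fderiv (d : E → F) (x : E) :
    Δ d x = ∑ i, fderiv ℝ (fderiv ℝ d) x (b i) (b i) := by
  simp [InnerProductSpace.laplacian_eq_iteratedFDeriv_orthonormalBasis d b,
    iteratedFDeriv_two_apply]

theorem sum_lineDeriv_stressEnergy (hd : ContDiffAt ℝ 2 d x) (p : E) :
    ∑ i, lineDeriv ℝ (fun y => stressEnergy b (fderiv ℝ d y) (b i) (y - p)) x (b i) =
      (1 - Fintype.card ι / 2) * hilbertSchmidtSq b (fderiv ℝ d x)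
        + ⟪Δ d x, fderiv ℝ d x (x - p)⟫ := by
  set L := fderiv ℝ d x
  set H := fderiv ℝ (fderiv ℝ d) x
  have hH : HasFDerivAt (fderiv ℝ d) H x :=
    ((hd.fderiv_right (m := 1) le_rfl).differentiableAt one_ne_zero).hasFDerivAt
  have hsymm : ∀ v w, H v w = H w v := hd.isSymmSndFDerivAt (by simp)
  have hline : ∀ i, lineDeriv ℝ (fun y => stressEnergy b (fderiv ℝ d y) (b i) (y - p)) x (b i) =
      stressEnergy b L (b i) (b i) + (⟪H (b i) (b i), L (x - p)⟫ + ⟪L (b i), H (b i) (x - p)⟫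
        - (∑ k, ⟪L (b k), H (b i) (b k)⟫) * ⟪b i, x - p⟫) := fun i => by
    have hx : HasDerivAt (fun t : ℝ => x + t • b i - p) (b i) 0 := by
      simpa using (((hasDerivAt_id (0 : ℝ)).smul_const (b i)).const_add x).sub_const p
    have hS := hasDerivAt_stressEnergy b (hH.hasLineDerivAt (b i)) hx (b i)
    rw [zero_smul, add_zero] at hS
    exact HasLineDerivAt.lineDeriv hS
  have hcancel : ∑ i, (∑ k, ⟪L (b k), H (b i) (b k)⟫) * ⟪b i, x - p⟫ =
      ∑ k, ⟪L (b k), H (b k) (x - p)⟫ := by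
    simp only [Finset.sum_mul]
    rw [Finset.sum_comm]
    refine Finset.sum_congr rfl fun k _ => ?_
    rw [hsymm (b k) (x - p)]
    conv_rhs => rw [← b.sum_repr' (x - p), map_sum, sum_apply, inner_sum]
    simp [real_inner_smul_right, mul_comm]
  have htrace : ∑ i, stressEnergy b L (b i) (b i) =
      (1 - Fintype.card ι / 2) * hilbertSchmidtSq b L := by
    simp only [stressEnergy_self, Finset.sum_sub_distrib, b.norm_eq_one, ← hilbertSchmidtSq.eq_def,
      one_pow, mul_one, Finset.sum_const, Finset.card_univ, nsmul_eq_mul]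
    ring
  simp only [hline, Finset.sum_add_distrib, Finset.sum_sub_distrib, hcancel, htrace,
    laplacian_eq_sum_fderiv_fderiv b, sum_inner]
  ring

end StressEnergy

theorem uniqueDiffOn_closedBall {E : Type*} [NormedAddCommGroup E] [NormedSpace ℝ E] (p : E) {R : ℝ}
    (hR : 0 < R) : UniqueDiffOn ℝ (closedBall p R) :=
  uniqueDiffOn_convex (convex_closedBall p R) (by simp [interior_closedBall p hR.ne', hR])

theorem integrableOn_interior_of_eqOn {X G : Type*} [TopologicalSpace X] [T2Space X]
    [MeasurableSpace X] [OpensMeasurableSpace X] [NormedAddCommGroup G]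
    {μ : Measure X} [IsFiniteMeasureOnCompacts μ] {K : Set X} {f g : X → G}
    (hK : IsCompact K) (hg : ContinuousOn g K) (hfg : (interior K).EqOn g f) :
    IntegrableOn f (interior K) μ :=
  ((hg.integrableOn_compact hK).mono_set interior_subset).congr_fun hfg
    isOpen_interior.measurableSet

section Stationarity

variable {ι E F : Type*} [Fintype ι] [NormedAddCommGroup E] [InnerProductSpace ℝ E]
  [NormedAddCommGroup F] [InnerProductSpace ℝ F] (b : OrthonormalBasis ι ℝ E) {d : E → F} {x : E}
  {K : Set E}

theorem inner_fderiv_eq_zero_of_eventually_norm_eq {c : ℝ} (hd : DifferentiableAt ℝ d x)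
    (hnorm : ∀ᶠ y in 𝓝 x, ‖d y‖ = c) (v : E) : ⟪d x, fderiv ℝ d x v⟫ = 0 := by
  have hconst : (fun y => ‖d y‖ ^ 2) =ᶠ[𝓝 x] fun _ => c ^ 2 :=
    hnorm.mono fun y hy => by simp only [hy]
  have hderiv := hd.hasFDerivAt.norm_sq.unique
    ((hasFDerivAt_const (c ^ 2) x).congr_of_eventuallyEq hconst)
  simpa using DFunLike.congr_fun hderiv v

theorem contDiffOn_stressEnergy_fderivWithin (hd : ContDiffOn ℝ 2 d K) (hK : UniqueDiffOn ℝ K)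
    (v p : E) :
    ContDiffOn ℝ 1 (fun y => stressEnergy b (fderivWithin ℝ d K y) v (y - p)) K := by
  have hL : ContDiffOn ℝ 1 (fderivWithin ℝ d K) K := hd.fderivWithin hK le_rfl
  have hLc : ∀ w, ContDiffOn ℝ 1 (fun y => fderivWithin ℝ d K y w) K := fun w =>
    hL.clm_apply contDiffOn_const
  have hy : ContDiffOn ℝ 1 (fun y => y - p) K := contDiffOn_id.sub contDiffOn_const
  exact ((hLc v).inner ℝ (hL.clm_apply hy)).sub
    (((ContDiffOn.sum fun i _ => (hLc (b i)).norm_sq ℝ).div_const 2).mul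
      (contDiffOn_const.inner ℝ hy))

theorem exists_lipschitzOnWith_stressEnergy_fderiv (hd : ContDiffOn ℝ 2 d K) (hK : Convex ℝ K)
    (hKc : IsCompact K) (hKi : (interior K).Nonempty) (v p : E) :
    ∃ C, LipschitzOnWith C (fun y => stressEnergy b (fderiv ℝ d y) v (y - p)) (interior K) := by
  obtain ⟨C, hC⟩ := (contDiffOn_stressEnergy_fderivWithin b hd (uniqueDiffOn_convex hK hKi) v
    p).exists_lipschitzOnWith one_ne_zero hK hKc
  refine ⟨C, fun y hy z hz => ?_⟩
  simpa only [fderivWithin_of_mem_nhds (mem_interior_iff_mem_nhds.1 hy),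
    fderivWithin_of_mem_nhds (mem_interior_iff_mem_nhds.1 hz)] using
    hC (interior_subset hy) (interior_subset hz)

theorem continuousOn_hilbertSchmidtSq_fderivWithin (hd : ContDiffOn ℝ 1 d K)
    (hK : UniqueDiffOn ℝ K) :
    ContinuousOn (fun x => hilbertSchmidtSq b (fderivWithin ℝ d K x)) K :=
  continuousOn_finsetSum _ fun _ _ =>
    (((hd.continuousOn_fderivWithin hK le_rfl).clm_apply continuousOn_const).norm).pow 2

theorem continuousOn_laplacianWithin [FiniteDimensional ℝ E] (hd : ContDiffOn ℝ 2 d K)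
    (hK : UniqueDiffOn ℝ K) :
    ContinuousOn (Δ[K] d) K := by
  refine ContinuousOn.congr ?_ fun x hx =>
    InnerProductSpace.laplacianWithin_eq_iteratedFDerivWithin_orthonormalBasis d hK hx
      (stdOrthonormalBasis ℝ E)
  exact continuousOn_finsetSum _ fun i _ =>
    (ContinuousMultilinearMap.apply ℝ (fun _ : Fin 2 => E) F _).continuous.comp_continuousOn
      (hd.continuousOn_iteratedFDerivWithin le_rfl hK)

theorem laplacianWithin_eq_laplacian [FiniteDimensional ℝ E] (hK : UniqueDiffOn ℝ K)
    (hd : ContDiffAt ℝ 2 d x) (hx : x ∈ K) : (Δ[K] d) x = Δ d x := by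
  rw [InnerProductSpace.laplacianWithin_eq_iteratedFDerivWithin_stdOrthonormalBasis d hK hx,
    InnerProductSpace.laplacian_eq_iteratedFDeriv_stdOrthonormalBasis,
    iteratedFDerivWithin_eq_iteratedFDeriv hK hd hx]

variable [MeasurableSpace E] [BorelSpace E] {μ : Measure E}

theorem integrableOn_hilbertSchmidtSq_fderiv [IsFiniteMeasureOnCompacts μ]
    (hd : ContDiffOn ℝ 1 d K) (hK : UniqueDiffOn ℝ K) (hKc : IsCompact K) :
    IntegrableOn (fun x => hilbertSchmidtSq b (fderiv ℝ d x)) (interior K) μ :=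
  integrableOn_interior_of_eqOn hKc (continuousOn_hilbertSchmidtSq_fderivWithin b hd hK)
    fun x hx => by simp only [fderivWithin_of_mem_nhds (mem_interior_iff_mem_nhds.1 hx)]

variable [FiniteDimensional ℝ E]

theorem integrableOn_norm_tension_sq [IsFiniteMeasureOnCompacts μ] (hd : ContDiffOn ℝ 2 d K)
    (hK : UniqueDiffOn ℝ K) (hKc : IsCompact K) :
    IntegrableOn (fun x => ‖Δ d x + hilbertSchmidtSq b (fderiv ℝ d x) • d x‖ ^ 2)
      (interior K) μ := by
  refine integrableOn_interior_of_eqOn hKc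
    (((continuousOn_laplacianWithin hd hK).add
      ((continuousOn_hilbertSchmidtSq_fderivWithin b (hd.of_le one_le_two) hK).smul
        hd.continuousOn)).norm.pow 2) fun x hx => ?_
  have hKx : K ∈ 𝓝 x := mem_interior_iff_mem_nhds.1 hx
  simp only [Pi.add_apply, Pi.pow_apply, Pi.smul_apply', fderivWithin_of_mem_nhds hKx,
    laplacianWithin_eq_laplacian hK (hd.contDiffAt hKx) (interior_subset hx)]

/- This is the divergence theorem for `x ↦ φ x • stressEnergy b (fderiv ℝ d x) · (x - p)`, i.e. the
first variation of the Dirichlet energy of `d` along `φ x • (x - p)`. -/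
theorem integrableOn_and_setIntegral_stationarity [μ.IsAddHaarMeasure] (hd : ContDiffOn ℝ 2 d K)
    (hK : Convex ℝ K) (hKc : IsCompact K) (hKi : (interior K).Nonempty) {φ : E → ℝ} {D : ℝ≥0}
    (hφ : LipschitzWith D φ) (hφc : HasCompactSupport φ) (hφ_nonneg : 0 ≤ φ)
    (hφK : ∀ x ∉ interior K, φ x = 0) (p : E) :
    let f := fun x =>
      φ x * ((1 - Fintype.card ι / 2) * hilbertSchmidtSq b (fderiv ℝ d x)
          + ⟪Δ d x, fderiv ℝ d x (x - p)⟫)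
        + ∑ i, lineDeriv ℝ φ x (b i) * stressEnergy b (fderiv ℝ d x) (b i) (x - p)
    IntegrableOn f (interior K) μ ∧ ∫ x in interior K, f x ∂μ = 0 := by
  intro f
  choose C hC using fun i => exists_lipschitzOnWith_stressEnergy_fderiv b hd hK hKc hKi (b i) p
  have hdiv := fun i => integrableOn_and_setIntegral_lineDeriv_mul_add (μ := μ) isOpen_interior
    (hC i) hφ hφc hφ_nonneg hφK (b i)
  have hsum : (interior K).EqOn (fun x => ∑ i,
      (lineDeriv ℝ (fun y => stressEnergy b (fderiv ℝ d y) (b i) (y - p)) x (b i) * φ x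
        + lineDeriv ℝ φ x (b i) * stressEnergy b (fderiv ℝ d x) (b i) (x - p))) f := by
    intro x hx
    simp only [f, Finset.sum_add_distrib, ← Finset.sum_mul,
      sum_lineDeriv_stressEnergy b (hd.contDiffAt (mem_interior_iff_mem_nhds.1 hx)) p]
    ring
  refine ⟨IntegrableOn.congr_fun (integrable_finsetSum _ fun i _ => (hdiv i).1) hsum
    isOpen_interior.measurableSet, ?_⟩
  rw [← setIntegral_congr_fun isOpen_interior.measurableSet hsum,
    integral_finsetSum _ fun i _ => (hdiv i).1]
  exact Finset.sum_eq_zero fun i _ => (hdiv i).2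

end Stationarity

section RadialCutoff

variable {E : Type*} [NormedAddCommGroup E] {m : ℕ} {r R : ℝ} {p x : E}

/-- The Lipschitz cutoff `ρ⁻ᵐ - R⁻ᵐ` in the distance `ρ` to `p`, made constant for `ρ ≤ r` and
for `R ≤ ρ`. In dimension `m + 2` it turns the first variation of the Dirichlet energy along the
radial field into the comparison of the energies, scaled by `r⁻ᵐ` and `R⁻ᵐ`, of the two balls. -/
def radialCutoff (m : ℕ) (r R : ℝ) (p x : E) : ℝ :=
  1 / max (min ‖x - p‖ R) r ^ m - 1 / R ^ m

theorem radialCutoff_of_norm_le (hx : ‖x - p‖ ≤ R) :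
    radialCutoff m r R p x = 1 / max ‖x - p‖ r ^ m - 1 / R ^ m := by
  rw [radialCutoff, min_eq_left hx]

theorem radialCutoff_of_le_norm (hrR : r ≤ R) (hx : R ≤ ‖x - p‖) : radialCutoff m r R p x = 0 := by
  rw [radialCutoff, min_eq_right hx, max_eq_left hrR, sub_self]

theorem radialCutoff_nonneg (hr : 0 < r) (hrR : r ≤ R) : 0 ≤ radialCutoff m r R p := fun x =>
  sub_nonneg.2 (one_div_le_one_div_of_le (by positivity)
    (pow_le_pow_left₀ (by positivity) (max_le (min_le_right _ _) hrR) m))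

theorem hasCompactSupport_radialCutoff [ProperSpace E] (hrR : r ≤ R) :
    HasCompactSupport (radialCutoff m r R p) :=
  HasCompactSupport.intro (isCompact_closedBall p R) fun x hx =>
    radialCutoff_of_le_norm hrR (by simpa [dist_eq_norm] using hx : R < ‖x - p‖).le

theorem exists_lipschitzWith_radialCutoff (hr : 0 < r) (hrR : r ≤ R) :
    ∃ D, LipschitzWith D (radialCutoff m r R p) := by
  have hsmooth : ContDiffOn ℝ 1 (fun t : ℝ => 1 / t ^ m - 1 / R ^ m) (Set.Icc r R) :=
    (contDiffOn_const.div (contDiffOn_id.pow m) fun t ht =>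
      pow_ne_zero m (hr.trans_le ht.1).ne').sub contDiffOn_const
  obtain ⟨D, hD⟩ := hsmooth.exists_lipschitzOnWith one_ne_zero (convex_Icc r R) isCompact_Icc
  have hclamp : LipschitzWith 1 fun x => max (min ‖x - p‖ R) r := by
    simpa only [dist_eq_norm] using ((LipschitzWith.dist_left p).min_const R).max_const r
  exact ⟨_, lipschitzOnWith_univ.1 <| hD.comp hclamp.lipschitzOnWith fun x _ =>
    ⟨le_max_right _ _, max_le (min_le_right _ _) hrR⟩⟩

theorem lineDeriv_radialCutoff_of_norm_lt [NormedSpace ℝ E] (hx : ‖x - p‖ < r) (v : E) :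
    lineDeriv ℝ (radialCutoff m r R p) x v = 0 := by
  have hconst : radialCutoff m r R p =ᶠ[𝓝 x] fun _ => 1 / r ^ m - 1 / R ^ m :=
    ((continuous_sub_right p).norm.continuousAt.eventually_lt_const hx).mono fun y hy => by
      rw [radialCutoff, max_eq_right ((min_le_left _ _).trans hy.le)]
  rw [hconst.lineDeriv_eq]
  simp [lineDeriv]

variable [InnerProductSpace ℝ E]

theorem hasFDerivAt_norm_sub (hx : x ≠ p) :
    HasFDerivAt (fun y => ‖y - p‖) (‖x - p‖⁻¹ • innerSL ℝ (x - p)) x := by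
  have hsq := ((hasFDerivAt_id x).sub_const p).norm_sq.sqrt
    (pow_ne_zero 2 (norm_ne_zero_iff.2 (sub_ne_zero.2 hx)))
  simp only [id_eq, Real.sqrt_sq (norm_nonneg _)] at hsq
  refine hsq.congr_fderiv ?_
  ext v
  simp
  ring

theorem lineDeriv_radialCutoff_of_lt_norm_of_norm_lt (hr : 0 < r) (hxr : r < ‖x - p‖)
    (hxR : ‖x - p‖ < R) (v : E) :
    lineDeriv ℝ (radialCutoff m r R p) x v = -(m / ‖x - p‖ ^ (m + 2)) * ⟪x - p, v⟫ := by
  have hρ : 0 < ‖x - p‖ := hr.trans hxr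
  have hcont : ContinuousAt (fun y => ‖y - p‖) x := (continuous_sub_right p).norm.continuousAt
  have hpow : radialCutoff m r R p =ᶠ[𝓝 x] fun y => (‖y - p‖ ^ m)⁻¹ - 1 / R ^ m := by
    filter_upwards [hcont.eventually_const_lt hxr, hcont.eventually_lt_const hxR] with y hyr hyR
    rw [radialCutoff_of_norm_le hyR.le, max_eq_left hyr.le, one_div]
  have hnorm : HasDerivAt (fun t : ℝ => ‖x + t • v - p‖) (‖x - p‖⁻¹ * ⟪x - p, v⟫) 0 :=
    (hasFDerivAt_norm_sub (sub_ne_zero.1 (norm_pos_iff.1 hρ))).hasLineDerivAt v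
  have hderiv := ((hnorm.fun_pow m).fun_inv (by simpa using pow_ne_zero m hρ.ne')).sub_const
    (1 / R ^ m)
  rw [hpow.lineDeriv_eq, lineDeriv, hderiv.deriv]
  rcases m with _ | m
  · simp
  · simp only [zero_smul, add_zero, add_tsub_cancel_right]
    field_simp
    ring

end RadialCutoff

section RadialFirstVariation

variable {ι E F : Type*} [Fintype ι] [NormedAddCommGroup E] [InnerProductSpace ℝ E]
  [NormedAddCommGroup F] [InnerProductSpace ℝ F] (b : OrthonormalBasis ι ℝ E) {m : ℕ} {r R : ℝ}
  {p x : E}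

theorem mul_le_sq_mul_sq_div_add {c s : ℝ} (hc : 0 < c) (hs : 0 < s) (t w : ℝ) :
    t * w ≤ s ^ 2 * t ^ 2 / c + c * w ^ 2 / (4 * s ^ 2) := by
  have hsq : s ^ 2 * t ^ 2 / c + c * w ^ 2 / (4 * s ^ 2) - t * w =
      (2 * s ^ 2 * t - c * w) ^ 2 / (4 * c * s ^ 2) := by
    field_simp
    ring
  exact sub_nonneg.1 (hsq ▸ by positivity)

theorem one_div_pow_sub_mul_inner_le (hm : 0 < m) {s : ℝ} (hs : 0 < s) (hsR : s ≤ R) (T u : F) :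
    (1 / s ^ m - 1 / R ^ m) * ⟪T, u⟫ ≤
      s ^ 2 / s ^ m * ‖T‖ ^ 2 / m + m * ‖u‖ ^ 2 / (4 * s ^ (m + 2)) := by
  have hR : 0 < R := hs.trans_le hsR
  have hcoef : 0 ≤ 1 / s ^ m - 1 / R ^ m :=
    sub_nonneg.2 (one_div_le_one_div_of_le (by positivity) (pow_le_pow_left₀ hs.le hsR m))
  calc (1 / s ^ m - 1 / R ^ m) * ⟪T, u⟫ ≤ (1 / s ^ m - 1 / R ^ m) * (‖T‖ * ‖u‖) := by
        gcongr
        exact real_inner_le_norm T u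
    _ ≤ 1 / s ^ m * (‖T‖ * ‖u‖) := by
        gcongr
        exact sub_le_self _ (by positivity)
    _ ≤ 1 / s ^ m * (s ^ 2 * ‖T‖ ^ 2 / m + m * ‖u‖ ^ 2 / (4 * s ^ 2)) := by
        gcongr
        exact mul_le_sq_mul_sq_div_add (Nat.cast_pos.2 hm) hs _ _
    _ = s ^ 2 / s ^ m * ‖T‖ ^ 2 / m + m * ‖u‖ ^ 2 / (4 * s ^ (m + 2)) := by
        field_simp
        ring

/-- The integrand of the first variation of the Dirichlet energy along
`radialCutoff m r R p x • (x - p)`, for a map with derivative `L` and tension field `T` at `x`. -/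
def radialFirstVariation (b : OrthonormalBasis ι ℝ E) (m : ℕ) (r R : ℝ) (p x : E) (L : E →L[ℝ] F)
    (T : F) : ℝ :=
  radialCutoff m r R p x * ((1 - Fintype.card ι / 2) * hilbertSchmidtSq b L + ⟪T, L (x - p)⟫)
    + ∑ i, lineDeriv ℝ (radialCutoff m r R p) x (b i) * stressEnergy b L (b i) (x - p)

theorem radialFirstVariation_le_of_norm_lt (hcard : Fintype.card ι = m + 2) (hm : 0 < m)
    (hrR : r ≤ R) (hx : ‖x - p‖ < r) (L : E →L[ℝ] F) (T : F) :
    radialFirstVariation b m r R p x L T ≤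
      m / 2 * (hilbertSchmidtSq b L / R ^ m) + r ^ 2 / r ^ m * ‖T‖ ^ 2 / m
        - m / 4 * (hilbertSchmidtSq b L / r ^ m) := by
  have hr : 0 < r := (norm_nonneg _).trans_lt hx
  have : 0 < R := hr.trans_le hrR
  have hLx : ‖L (x - p)‖ ^ 2 ≤ r ^ 2 * hilbertSchmidtSq b L :=
    (norm_apply_sq_le_mul_hilbertSchmidtSq b L (x - p)).trans
      (mul_le_mul_of_nonneg_right (by gcongr) (hilbertSchmidtSq_nonneg b L))
  have htension := one_div_pow_sub_mul_inner_le hm hr hrR T (L (x - p))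
  have habsorb : m * ‖L (x - p)‖ ^ 2 / (4 * r ^ (m + 2)) ≤
      m / 4 * (hilbertSchmidtSq b L / r ^ m) := by
    calc m * ‖L (x - p)‖ ^ 2 / (4 * r ^ (m + 2))
        ≤ m * (r ^ 2 * hilbertSchmidtSq b L) / (4 * r ^ (m + 2)) := by gcongr
      _ = m / 4 * (hilbertSchmidtSq b L / r ^ m) := by
        field_simp
        ring
  simp only [radialFirstVariation, lineDeriv_radialCutoff_of_norm_lt hx, zero_mul,
    Finset.sum_const_zero, add_zero, radialCutoff_of_norm_le (hx.le.trans hrR),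
    max_eq_right hx.le, hcard, Nat.cast_add, Nat.cast_ofNat]
  linear_combination htension + habsorb

theorem radialFirstVariation_le_of_lt_norm (hcard : Fintype.card ι = m + 2) (hm : 0 < m)
    (hr : 0 < r) (hxr : r < ‖x - p‖) (hxR : ‖x - p‖ < R) (L : E →L[ℝ] F) (T : F) :
    radialFirstVariation b m r R p x L T ≤
      m / 2 * (hilbertSchmidtSq b L / R ^ m)
        + ‖x - p‖ ^ 2 / ‖x - p‖ ^ m * ‖T‖ ^ 2 / m := by
  have hρ : 0 < ‖x - p‖ := hr.trans hxr
  have htension := one_div_pow_sub_mul_inner_le hm hρ hxR.le T (L (x - p))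
  have habsorb : m * ‖L (x - p)‖ ^ 2 / (4 * ‖x - p‖ ^ (m + 2)) ≤
      m * ‖L (x - p)‖ ^ 2 / ‖x - p‖ ^ (m + 2) := by
    gcongr
    exact le_mul_of_one_le_left (by positivity) (by norm_num)
  have hcancel : m / ‖x - p‖ ^ (m + 2) * (hilbertSchmidtSq b L / 2 * ‖x - p‖ ^ 2) =
      m / 2 * (hilbertSchmidtSq b L / ‖x - p‖ ^ m) := by
    field_simp
    ring
  simp only [radialFirstVariation, lineDeriv_radialCutoff_of_lt_norm_of_norm_lt hr hxr hxR,
    mul_assoc, ← Finset.mul_sum, sum_inner_mul_stressEnergy, stressEnergy_self,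
    radialCutoff_of_norm_le hxR.le, max_eq_left hxr.le, hcard, Nat.cast_add, Nat.cast_ofNat]
  linear_combination htension + habsorb + hcancel

theorem radialFirstVariation_le (hcard : Fintype.card ι = m + 2) (hm : 0 < m) (hr : 0 < r)
    (hrR : r ≤ R) (hx : ‖x - p‖ < R) (hxr : ‖x - p‖ ≠ r) (L : E →L[ℝ] F) (T : F) :
    radialFirstVariation b m r R p x L T ≤
      m / 2 * (hilbertSchmidtSq b L / R ^ m)
        + max ‖x - p‖ r ^ 2 / max ‖x - p‖ r ^ m * ‖T‖ ^ 2 / m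
        - (ball p r).indicator (fun _ => m / 4 * (hilbertSchmidtSq b L / r ^ m)) x := by
  rcases hxr.lt_or_gt with hlt | hgt
  · rw [max_eq_right hlt.le, Set.indicator_of_mem (mem_ball_iff_norm.2 hlt)]
    exact radialFirstVariation_le_of_norm_lt b hcard hm hrR hlt L T
  · rw [max_eq_left hgt.le, Set.indicator_of_notMem (mem_ball_iff_norm.not.2 hgt.le.not_gt),
      sub_zero]
    exact radialFirstVariation_le_of_lt_norm b hcard hm hr hgt hx L T

variable [FiniteDimensional ℝ E] [MeasurableSpace E] [BorelSpace E] {μ : Measure E}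

theorem integrableOn_max_norm_weight_mul {f : E → ℝ} (hr : 0 < r)
    (hf : IntegrableOn f (ball p R) μ) :
    IntegrableOn (fun x => max ‖x - p‖ r ^ 2 / max ‖x - p‖ r ^ m * f x) (ball p R) μ := by
  have hmax : Continuous fun x => max ‖x - p‖ r :=
    (continuous_sub_right p).norm.max continuous_const
  exact hf.continuousOn_mul_of_subset
    ((hmax.pow 2).div₀ (hmax.pow m) fun x => (pow_pos (lt_max_of_lt_right hr) m).ne').continuousOn
    (isCompact_closedBall p R) measurableSet_ball ball_subset_closedBall

theorem sq_div_pow_le {s : ℝ} (hm : m ≤ 2) (hs : 0 < s) (hsR : s ≤ R) :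
    s ^ 2 / s ^ m ≤ R ^ 2 / R ^ m := by
  rw [div_eq_mul_inv, div_eq_mul_inv, ← pow_sub₀ s hs.ne' hm, ← pow_sub₀ R (hs.trans_le hsR).ne' hm]
  exact pow_le_pow_left₀ hs.le hsR _

theorem setIntegral_max_norm_weight_mul_le {f : E → ℝ} (hm : m ≤ 2) (hr : 0 < r) (hrR : r ≤ R)
    (hf : IntegrableOn f (ball p R) μ) (hf_nonneg : 0 ≤ f) :
    ∫ x in ball p R, max ‖x - p‖ r ^ 2 / max ‖x - p‖ r ^ m * f x ∂μ ≤
      R ^ 2 / R ^ m * ∫ x in ball p R, f x ∂μ := by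
  rw [← integral_const_mul]
  exact setIntegral_mono_on (integrableOn_max_norm_weight_mul hr hf) (hf.const_mul _)
    measurableSet_ball fun x hx => mul_le_mul_of_nonneg_right
      (sq_div_pow_le hm (lt_max_of_lt_right hr) (max_le (mem_ball_iff_norm.1 hx).le hrR))
      (hf_nonneg x)

variable [μ.IsAddHaarMeasure] {d τ : E → F}

theorem integrableOn_and_setIntegral_radialFirstVariation (hr : 0 < r) (hrR : r ≤ R)
    (hd : ContDiffOn ℝ 2 d (closedBall p R))
    (hτ : ∀ x ∈ ball p R, ∀ v, ⟪τ x, fderiv ℝ d x v⟫ = ⟪Δ d x, fderiv ℝ d x v⟫) :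
    IntegrableOn (fun x => radialFirstVariation b m r R p x (fderiv ℝ d x) (τ x)) (ball p R) μ ∧
      ∫ x in ball p R, radialFirstVariation b m r R p x (fderiv ℝ d x) (τ x) ∂μ = 0 := by
  have hint : interior (closedBall p R) = ball p R := interior_closedBall p (hr.trans_le hrR).ne'
  obtain ⟨D, hD⟩ := exists_lipschitzWith_radialCutoff (m := m) (p := p) hr hrR
  have hvanish : ∀ x ∉ interior (closedBall p R), radialCutoff m r R p x = 0 := fun x hx =>
    radialCutoff_of_le_norm hrR (by rwa [hint, mem_ball_iff_norm, not_lt] at hx)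
  have hstat := integrableOn_and_setIntegral_stationarity (μ := μ) b hd (convex_closedBall p R)
    (isCompact_closedBall p R) (hint ▸ nonempty_ball.2 (hr.trans_le hrR)) hD
    (hasCompactSupport_radialCutoff hrR) (radialCutoff_nonneg hr hrR) hvanish p
  rw [hint] at hstat
  have heq : (ball p R).EqOn
      (fun x => radialFirstVariation b m r R p x (fderiv ℝ d x) (Δ d x))
      (fun x => radialFirstVariation b m r R p x (fderiv ℝ d x) (τ x)) := fun x hx => by
    simp only [radialFirstVariation, hτ x hx]
  exact ⟨hstat.1.congr_fun heq measurableSet_ball,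
    (setIntegral_congr_fun measurableSet_ball heq).symm.trans hstat.2⟩

theorem integrableOn_hilbertSchmidtSq_fderiv_ball (hR : 0 < R)
    (hd : ContDiffOn ℝ 1 d (closedBall p R)) :
    IntegrableOn (fun x => hilbertSchmidtSq b (fderiv ℝ d x)) (ball p R) μ :=
  interior_closedBall p hR.ne' ▸ integrableOn_hilbertSchmidtSq_fderiv b hd
    (uniqueDiffOn_closedBall p hR) (isCompact_closedBall p R)

theorem energy_ball_le_add_weighted_tension (hcard : Fintype.card ι = m + 2) (hm : 0 < m)
    (hr : 0 < r) (hrR : r ≤ R) (hd : ContDiffOn ℝ 2 d (closedBall p R))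
    (hτ : ∀ x ∈ ball p R, ∀ v, ⟪τ x, fderiv ℝ d x v⟫ = ⟪Δ d x, fderiv ℝ d x v⟫)
    (hτ_int : IntegrableOn (fun x => ‖τ x‖ ^ 2) (ball p R) μ) :
    1 / r ^ m * ∫ x in ball p r, hilbertSchmidtSq b (fderiv ℝ d x) ∂μ ≤
      2 / R ^ m * ∫ x in ball p R, hilbertSchmidtSq b (fderiv ℝ d x) ∂μ
        + 4 / m ^ 2 *
          ∫ x in ball p R, max ‖x - p‖ r ^ 2 / max ‖x - p‖ r ^ m * ‖τ x‖ ^ 2 ∂μ := by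
  have he := integrableOn_hilbertSchmidtSq_fderiv_ball (μ := μ) b (hr.trans_le hrR)
    (hd.of_le one_le_two)
  have hW := integrableOn_max_norm_weight_mul (m := m) hr hτ_int
  have heW := ((he.div_const (R ^ m)).const_mul (m / 2)).add (hW.div_const m)
  have her : IntegrableOn ((ball p r).indicator fun x =>
      m / 4 * (hilbertSchmidtSq b (fderiv ℝ d x) / r ^ m)) (ball p R) μ :=
    ((he.div_const (r ^ m)).const_mul (m / 4)).indicator measurableSet_ball
  obtain ⟨hV, hV_zero⟩ :=
    integrableOn_and_setIntegral_radialFirstVariation (m := m) (μ := μ) b hr hrR hd hτ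
  have hsphere : ∀ᵐ x ∂μ, ‖x - p‖ ≠ r := by
    simpa only [mem_sphere_iff_norm] using
      measure_eq_zero_iff_ae_notMem.1 (Measure.addHaar_sphere_of_ne_zero μ p hr.ne')
  have hmono := setIntegral_mono_on_ae hV (heW.sub her) measurableSet_ball
    (hsphere.mono fun x hxr hx =>
      radialFirstVariation_le b hcard hm hr hrR (mem_ball_iff_norm.1 hx) hxr (fderiv ℝ d x) (τ x))
  rw [hV_zero, integral_sub' heW her, integral_add' ((he.div_const _).const_mul _) (hW.div_const _),
    setIntegral_indicator measurableSet_ball, Set.inter_eq_right.2 (ball_subset_ball hrR)] at hmono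
  simp only [integral_const_mul, integral_div] at hmono
  have : (0 : ℝ) < m := Nat.cast_pos.2 hm
  refine sub_nonneg.1 ((mul_nonneg (by positivity : 0 ≤ 4 / (m : ℝ)) hmono).trans_eq ?_)
  field_simp
  ring

theorem stmt_15_general (hcard : Fintype.card ι = m + 2) (hm : 0 < m) (hm2 : m ≤ 2) (hr : 0 < r)
    (hrR : r ≤ R) (hd : ContDiffOn ℝ 2 d (closedBall p R)) (hunit : ∀ x ∈ ball p R, ‖d x‖ = 1)
    {Λ : ℝ}
    (hτ : ∫ x in ball p R, ‖Δ d x + hilbertSchmidtSq b (fderiv ℝ d x) • d x‖ ^ 2 ∂μ ≤ Λ) :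
    1 / r ^ m * ∫ x in ball p r, hilbertSchmidtSq b (fderiv ℝ d x) ∂μ ≤
      2 / R ^ m * ∫ x in ball p R, hilbertSchmidtSq b (fderiv ℝ d x) ∂μ
        + 4 / m ^ 2 * Λ * (R ^ 2 / R ^ m) := by
  have hR : 0 < R := hr.trans_le hrR
  have horth : ∀ x ∈ ball p R, ∀ v,
      ⟪Δ d x + hilbertSchmidtSq b (fderiv ℝ d x) • d x, fderiv ℝ d x v⟫ =
        ⟪Δ d x, fderiv ℝ d x v⟫ := fun x hx v => by
    have hdx : DifferentiableAt ℝ d x :=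
      (hd.contDiffAt (closedBall_mem_nhds_of_mem hx)).differentiableAt two_ne_zero
    rw [inner_add_left, real_inner_smul_left, inner_fderiv_eq_zero_of_eventually_norm_eq hdx
      (eventually_of_mem (isOpen_ball.mem_nhds hx) hunit), mul_zero, add_zero]
  have hτ_int := interior_closedBall p hR.ne' ▸ integrableOn_norm_tension_sq (μ := μ) b hd
    (uniqueDiffOn_closedBall p hR) (isCompact_closedBall p R)
  refine (energy_ball_le_add_weighted_tension b hcard hm hr hrR hd horth hτ_int).trans ?_
  rw [mul_assoc (4 / (m : ℝ) ^ 2), mul_comm Λ]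
  gcongr
  exact (setIntegral_max_norm_weight_mul_le hm2 hr hrR hτ_int fun x => sq_nonneg _).trans
    (mul_le_mul_of_nonneg_left hτ (by positivity))

end RadialFirstVariation

theorem gradSq3_eq_hilbertSchmidtSq (d : EuclideanSpace ℝ (Fin 3) → EuclideanSpace ℝ (Fin 3))
    (x : EuclideanSpace ℝ (Fin 3)) :
    gradSq3 d x = hilbertSchmidtSq (EuclideanSpace.basisFun (Fin 3) ℝ) (fderiv ℝ d x) := by
  simp only [gradSq3, hilbertSchmidtSq, E3, EuclideanSpace.basisFun_apply,
    EuclideanSpace.real_norm_sq_eq]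

theorem lap3_eq_laplacian {d : EuclideanSpace ℝ (Fin 3) → EuclideanSpace ℝ (Fin 3)}
    {x : EuclideanSpace ℝ (Fin 3)} (hd : ContDiffAt ℝ 2 d x) :
    lap3 d x = Δ d x := by
  have hdd : DifferentiableAt ℝ (fderiv ℝ d) x :=
    (hd.fderiv_right (m := 1) le_rfl).differentiableAt one_ne_zero
  simp [lap3, E3, laplacian_eq_sum_fderiv_fderiv (EuclideanSpace.basisFun (Fin 3) ℝ),
    fderiv_clm_apply hdd (differentiableAt_const _)]

/-- Almost-monotonicity of the scale-normalized Dirichlet energy for approximated harmonic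
maps into `S²`: if `‖d‖ ≡ 1` on the closed ball, `τ = Δd + |∇d|² d`, and
`∫_{B_R(p₀)} ‖τ‖² ≤ Λ`, then for `0 < r ≤ R`,
`r⁻¹ ∫_{B_r} |∇d|² ≤ 2R⁻¹ ∫_{B_R} |∇d|² + 4ΛR`. -/
theorem stmt_15 (Λ R : ℝ) (hΛ : 0 ≤ Λ) (hR : 0 < R) (p₀ : EuclideanSpace ℝ (Fin 3))
    (d : EuclideanSpace ℝ (Fin 3) → EuclideanSpace ℝ (Fin 3))
    (hd : ContDiffOn ℝ (⊤ : ℕ∞) d (Metric.closedBall p₀ R))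
    (hunit : ∀ x ∈ Metric.closedBall p₀ R, ‖d x‖ = 1)
    (hτ : (∫ x in Metric.ball p₀ R, ‖lap3 d x + gradSq3 d x • d x‖ ^ 2) ≤ Λ) :
    ∀ r : ℝ, 0 < r → r ≤ R →
      (1 / r) * (∫ x in Metric.ball p₀ r, gradSq3 d x) ≤
        (2 / R) * (∫ x in Metric.ball p₀ R, gradSq3 d x) + 4 * Λ * R := by
  intro r hr hrR
  have hd2 : ContDiffOn ℝ 2 d (closedBall p₀ R) := hd.of_le (WithTop.coe_le_coe.2 le_top)
  have hlap : ∀ x ∈ ball p₀ R, lap3 d x = Δ d x := fun x hx =>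
    lap3_eq_laplacian (hd2.contDiffAt (closedBall_mem_nhds_of_mem hx))
  simp only [gradSq3_eq_hilbertSchmidtSq] at hτ ⊢
  rw [setIntegral_congr_fun measurableSet_ball fun x hx => by rw [hlap x hx]] at hτ
  have hgen := stmt_15_general (m := 1) (EuclideanSpace.basisFun (Fin 3) ℝ) rfl one_pos one_le_two
    hr hrR hd2 (fun x hx => hunit x (ball_subset_closedBall hx)) hτ
  simpa only [pow_one, Nat.cast_one, sq, mul_one, div_one, mul_self_div_self] using hgen

end
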